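/- Let ⟨λ,ν⟩ be an ultrabasic block of type X of n that is special as a reduced marked partition. If X = B, then (λ⁻)* ∈ 𝒫_C(n−1) and d_S⟨λ,ν⟩ = (λ⁻)*; if X = C, then (λ⁺)* ∈ 𝒫_B(n+1) and d_S⟨λ,ν⟩ = (λ⁺)*; if X = D, then ((λ⁺)⁻)* ∈ 𝒫_D(n) and d_S⟨λ,ν⟩ = ((λ⁺)⁻)*. In other words, for special ultrabasic blocks the collapse in the formula for d_S on basic blocks is unnecessary. -/

import Mathlib

namespace NilDual

/-- A "partition" is encoded as a multiset of natural numbers (its parts). -/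
abbrev Ptn := Multiset ℕ

/-- All parts are positive. -/
def IsPartition (l : Ptn) : Prop := ∀ a ∈ l, 0 < a

/-- `height l a` is the number of parts of `l` that are ≥ `a`. -/
def height (l : Ptn) (a : ℕ) : ℕ := Multiset.card (l.filter (fun p => a ≤ p))

/-- `psum l j` is the sum of the `j` largest parts of `l`. -/
def psum (l : Ptn) (j : ℕ) : ℕ := ∑ a ∈ Finset.Icc 1 l.sum, min j (height l a)

/-- `Dom l m` means `l ≤ m` in the dominance order. -/
def Dom (l m : Ptn) : Prop := ∀ j : ℕ, psum l j ≤ psum m j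

/-- The transpose (conjugate) partition. -/
def transpose (l : Ptn) : Ptn :=
  Multiset.filter (fun x => 0 < x)
    (Multiset.map (fun a => height l a) (Finset.Icc 1 l.sum).val)

/-- The largest part (0 for the empty partition). -/
def maxPart (l : Ptn) : ℕ := l.sup

/-- The smallest part (0 for the empty partition). -/
noncomputable def minPart (l : Ptn) : ℕ := sInf {a : ℕ | a ∈ l}

/-- `λ⁺`: add 1 to the largest part. -/
def up (l : Ptn) : Ptn := (maxPart l + 1) ::ₘ l.erase (maxPart l)

/-- `λ⁻`: subtract 1 from the smallest part, deleting it if it becomes 0. -/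
noncomputable def down (l : Ptn) : Ptn :=
  if minPart l ≤ 1 then l.erase (minPart l)
  else (minPart l - 1) ::ₘ l.erase (minPart l)

/-- The join `λ ∨ μ = (λ* ∪ μ*)*`. -/
def pjoin (l m : Ptn) : Ptn := transpose (transpose l + transpose m)

/-- `λ₋ = (λ*⁻)*`. -/
noncomputable def lowerStar (l : Ptn) : Ptn := transpose (down (transpose l))

inductive PType | B | C | D
deriving DecidableEq

/-- Parts of this parity must occur with even multiplicity in a partition of type `X`. -/
def badPart : PType → ℕ → Prop
  | PType.B, a => Even a
  | PType.C, a => Odd a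
  | PType.D, a => Even a

/-- Membership in `𝒫_X` (sum unconstrained). -/
def InP (X : PType) (l : Ptn) : Prop :=
  IsPartition l ∧ ∀ a : ℕ, badPart X a → Even (l.count a)

/-- The parity of `n` required for `𝒫_X(n)` to be defined. -/
def sumParity : PType → ℕ → Prop
  | PType.B, n => Odd n
  | PType.C, n => Even n
  | PType.D, n => Even n

/-- `m` is the X-collapse of `l`: `m ∈ 𝒫_X(|l|)`, `m ≤ l` in dominance order, and `m`
dominates every member of `𝒫_X(|l|)` that is dominated by `l`. -/
def IsCollapse (X : PType) (l m : Ptn) : Prop :=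
  InP X m ∧ m.sum = l.sum ∧ Dom m l ∧
    ∀ ν : Ptn, InP X ν → ν.sum = l.sum → Dom ν l → Dom ν m

def CollapseDefined (X : PType) (l : Ptn) : Prop := ∃ m, IsCollapse X l m

open Classical in
/-- The X-collapse `λ_X` (junk value `0` if it does not exist). -/
noncomputable def collapse (X : PType) (l : Ptn) : Ptn :=
  if h : CollapseDefined X l then h.choose else 0

/-- `l` is superior to `m`: smallest part of `l` ≥ largest part of `m`. -/
def Superior (l m : Ptn) : Prop := maxPart m ≤ minPart l

def EvenlySuperior (l m : Ptn) : Prop := ∃ k : ℕ, Even k ∧ maxPart m ≤ k ∧ k ≤ minPart l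

def OddlySuperior (l m : Ptn) : Prop := ∃ k : ℕ, Odd k ∧ maxPart m ≤ k ∧ k ≤ minPart l

/-- The parity required of marked parts in type `X`. -/
def markParity : PType → ℕ → Prop
  | PType.C, a => Even a
  | _, a => Odd a

/-- `(ν, η)` is a marked partition of type `X`, with underlying partition `λ = ν + η`. -/
def IsMarked (X : PType) (nu eta : Ptn) : Prop :=
  InP X (nu + eta) ∧ sumParity X (nu + eta).sum ∧
  (∀ a ∈ nu, nu.count a = 1 ∧ markParity X a) ∧
  ((X = PType.B ∨ X = PType.D) → Even (Multiset.card nu))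

/-- The Sommers duality map `d_S` on marked partitions `(ν, η)`. -/
noncomputable def dS (X : PType) (nu eta : Ptn) : Ptn :=
  match X with
  | PType.B => collapse PType.C (transpose (nu + collapse PType.C (down eta)))
  | PType.C => collapse PType.B (transpose (nu + collapse PType.B (up eta)))
  | PType.D =>
      collapse PType.D (transpose (nu + transpose (collapse PType.D (transpose eta))))

/-- `a` is a markable part of `l` in type `X`. -/
def Markable (X : PType) (l : Ptn) (a : ℕ) : Prop :=
  a ∈ l ∧ markParity X a ∧
    (match X with
     | PType.B => Odd (height l a)
     | PType.C => Even (height l a)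
     | PType.D => Even (height l a))

/-- The marked partition `⟨l, ν⟩` is reduced. -/
def Reduced (X : PType) (l nu : Ptn) : Prop := ∀ a ∈ nu, Markable X l a

/-- The parts entering the definition of a special marked partition:
even of odd height (B), odd of even height (C), even of even height (D). -/
def AntiPart (X : PType) (l : Ptn) (a : ℕ) : Prop :=
  match X with
  | PType.B => Even a ∧ Odd (height l a)
  | PType.C => Odd a ∧ Even (height l a)
  | PType.D => Even a ∧ Even (height l a)

/-- The reduced marked partition `⟨l, ν⟩` is special. -/
def SpecialMP (X : PType) (l nu : Ptn) : Prop :=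
  ∀ a ∈ l, AntiPart X l a → Even (height nu a)

/-- `a` is the largest part of `l` whose height satisfies `P`. -/
def LargestWith (l : Ptn) (P : ℕ → Prop) (a : ℕ) : Prop :=
  a ∈ l ∧ P (height l a) ∧ ∀ b ∈ l, P (height l b) → b ≤ a

/-- Height parity for the top marked part in a basic block. -/
def heightParity : PType → ℕ → Prop
  | PType.B => fun n => Odd n
  | _ => fun n => Even n

/-- A basic block of type `X`. -/
def BasicBlock (X : PType) (nu eta : Ptn) : Prop :=
  IsMarked X nu eta ∧
  ((∃ n1 n2 : ℕ, n1 < n2 ∧ nu = {n2, n1} ∧ n1 = minPart (nu + eta) ∧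
      LargestWith (nu + eta) (heightParity X) n2) ∨
   (X = PType.C ∧ ∃ n2 : ℕ, nu = {n2} ∧ LargestWith (nu + eta) (heightParity X) n2))

/-- An ultrabasic block: a basic block with `n₁ ≤ 1`. -/
def Ultrabasic (X : PType) (nu eta : Ptn) : Prop :=
  BasicBlock X nu eta ∧ (Multiset.card nu = 2 → minPart nu ≤ 1)

/-!
Encode a partition `l` by its convex tail function `a ↦ tail l a = ∑ max (p - a) 0`. It is the
Legendre transform of the partial sums, so dominance is the pointwise order of tails, and
`l ∈ 𝒫_X` says that the tail is even on one residue class modulo `2`. Dually, `l* ∈ 𝒫_X` is a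
parity condition on the number `head l a` of boxes in the first `a` columns at the parts `a` of
`l`. The collapse rounds the tail down on the residue class and interpolates, hence changes it by
at most `1`.

Let `m` be the partition whose transpose is the claimed dual of a special ultrabasic block, and
`k = ν ∪ θ` the one whose transpose is collapsed by `d_S`. Then
`head m j ≤ head k j ≤ head m j + 1`. At a column `j` where `m` satisfies the parity condition,
partitions in `𝒫_X` cannot exploit the surplus of `k`. Being special forces the condition at all
parts of `m`. Where it fails, `j` lies below the largest mark and has the other parity, and there
the parity of `tail η j` makes the inner collapse exact, so that `head k j = head m j`.
-/

/-! ### Heights, heads and tails -/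

/-- The number of boxes in the first `a` columns of the Young diagram of `l`. -/
def head (l : Ptn) (a : ℕ) : ℕ := (l.map (min · a)).sum

/-- The number of boxes of the Young diagram of `l` outside its first `a` columns (the
subtraction `p - a` is truncated on purpose). As a function of `a` it is convex, and it is the
Legendre transform of `psum l`. -/
def tail (l : Ptn) (a : ℕ) : ℕ := (l.map (· - a)).sum

section Basic

variable (l m : Ptn) {a b : ℕ}

theorem height_cons (x a : ℕ) :
    height (x ::ₘ l) a = height l a + if a ≤ x then 1 else 0 := by
  simp only [height, ← Multiset.countP_eq_card_filter, Multiset.countP_cons]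

theorem height_add (a : ℕ) : height (l + m) a = height l a + height m a := by
  simp [height]

theorem tail_add (a : ℕ) : tail (l + m) a = tail l a + tail m a := by
  simp [tail]

theorem tail_cons (x a : ℕ) : tail (x ::ₘ l) a = x - a + tail l a := by
  simp [tail]

theorem head_zero : head l 0 = 0 := by
  simp [head]

theorem tail_zero : tail l 0 = l.sum := by
  simp [tail]

theorem head_add_tail (a : ℕ) : head l a + tail l a = l.sum := by
  rw [head, tail, ← Multiset.sum_map_add]
  simp only [Nat.add_comm (min _ a), Nat.sub_add_min_cancel, Multiset.map_id']

theorem tail_eq_height_add_tail (a : ℕ) : tail l a = height l (a + 1) + tail l (a + 1) := by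
  induction l using Multiset.induction_on with
  | empty => simp [tail, height]
  | cons x l ih => rw [tail_cons, tail_cons, height_cons]; split_ifs <;> omega

theorem head_succ (a : ℕ) : head l (a + 1) = head l a + height l (a + 1) := by
  have := tail_eq_height_add_tail l a
  have := head_add_tail l a
  have := head_add_tail l (a + 1)
  omega

theorem height_eq_height_add_count (a : ℕ) : height l a = height l (a + 1) + l.count a := by
  induction l using Multiset.induction_on with
  | empty => simp [height]
  | cons x l ih => rw [height_cons, height_cons, Multiset.count_cons]; split_ifs <;> omega

theorem tail_convex (a : ℕ) :
    tail l a + tail l (a + 2) = 2 * tail l (a + 1) + l.count (a + 1) := by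
  have : tail l a = height l (a + 1) + tail l (a + 1) := tail_eq_height_add_tail l a
  have : tail l (a + 1) = height l (a + 2) + tail l (a + 2) := tail_eq_height_add_tail l (a + 1)
  have : height l (a + 1) = height l (a + 2) + l.count (a + 1) :=
    height_eq_height_add_count l (a + 1)
  omega

theorem height_anti (hab : a ≤ b) : height l b ≤ height l a :=
  Multiset.card_le_card (Multiset.monotone_filter_right _ fun _ h => hab.trans h)

theorem height_pos_iff : 0 < height l a ↔ ∃ p ∈ l, a ≤ p := by
  rw [height, ← Multiset.countP_eq_card_filter, Multiset.countP_pos]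

theorem height_eq_zero_of_sum_lt (h : l.sum < a) : height l a = 0 := by
  by_contra hne
  obtain ⟨p, hp, hap⟩ := (height_pos_iff l).1 (Nat.pos_of_ne_zero hne)
  exact absurd (Multiset.le_sum_of_mem hp) (by omega)

theorem tail_eq_zero (h : ∀ p ∈ l, p ≤ a) : tail l a = 0 := by
  rw [tail, Multiset.map_congr rfl fun p hp => Nat.sub_eq_zero_of_le (h p hp)]
  simp

theorem tail_eq_zero_of_sum_le (h : l.sum ≤ a) : tail l a = 0 :=
  tail_eq_zero l fun _ hp => (Multiset.le_sum_of_mem hp).trans h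

theorem tail_add_mul_card (h : ∀ p ∈ l, a ≤ p) : tail l a + a * Multiset.card l = l.sum := by
  induction l using Multiset.induction_on with
  | empty => simp [tail]
  | cons x l ih =>
    have := ih fun p hp => h p (Multiset.mem_cons_of_mem hp)
    have := h x (Multiset.mem_cons_self _ _)
    rw [tail_cons, Multiset.card_cons, Multiset.sum_cons, Nat.mul_succ]
    omega

theorem head_eq_sum_height (a : ℕ) : head l a = ∑ b ∈ Finset.Ioc 0 a, height l b := by
  induction a with
  | zero => simp [head_zero]
  | succ a ih => rw [Finset.sum_Ioc_succ_top (Nat.zero_le a), ← ih, head_succ]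

theorem tail_eq_sum_height (a : ℕ) :
    tail l a = ∑ b ∈ Finset.Ioc a (a + l.sum), height l b := by
  have hsplit := Finset.sum_Ioc_consecutive (height l) (Nat.zero_le a) (Nat.le_add_right a l.sum)
  rw [← head_eq_sum_height, ← head_eq_sum_height] at hsplit
  have := head_add_tail l a
  have := head_add_tail l (a + l.sum)
  have := tail_eq_zero_of_sum_le l (Nat.le_add_left l.sum a)
  omega

variable {l m}

theorem height_one (hl : IsPartition l) : height l 1 = Multiset.card l :=
  congrArg Multiset.card (Multiset.filter_eq_self.2 hl)

theorem count_zero_eq_zero (hl : IsPartition l) : l.count 0 = 0 :=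
  Multiset.count_eq_zero_of_notMem fun h => (hl 0 h).ne rfl

theorem mem_of_height_succ_lt (h : height l (a + 1) < height l a) : a ∈ l := by
  have := height_eq_height_add_count l a
  exact Multiset.count_pos.1 (by omega)

theorem eq_of_height_eq (hl : IsPartition l) (hm : IsPartition m)
    (h : ∀ a, height l (a + 1) = height m (a + 1)) : l = m := by
  ext a
  rcases a with _ | a
  · rw [count_zero_eq_zero hl, count_zero_eq_zero hm]
  · have := height_eq_height_add_count l (a + 1)
    have := height_eq_height_add_count m (a + 1)
    have := h a
    have := h (a + 1)
    omega

theorem eq_of_tail_eq (hl : IsPartition l) (hm : IsPartition m)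
    (h : ∀ a, tail l a = tail m a) : l = m :=
  eq_of_height_eq hl hm fun a => by
    have := tail_eq_height_add_tail l a
    have := tail_eq_height_add_tail m a
    have := h a
    have := h (a + 1)
    omega

end Basic

/-! ### Transposition -/

section Transpose

variable (l : Ptn) {j k : ℕ}

theorem isPartition_transpose : IsPartition (transpose l) :=
  fun _ ha => (Multiset.mem_filter.1 ha).2

theorem height_transpose (hk : 0 < k) :
    height (transpose l) k = ((Finset.Icc 1 l.sum).filter (k ≤ height l ·)).card := by
  rw [height, transpose, Multiset.filter_filter, Multiset.filter_map, Multiset.card_map,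
    Finset.card_def, Finset.filter_val]
  congr 1
  refine Multiset.filter_congr fun b _ => ?_
  simp only [Function.comp]
  omega

theorem le_height_transpose_iff (hj : 0 < j) (hk : 0 < k) :
    j ≤ height (transpose l) k ↔ k ≤ height l j := by
  rw [height_transpose l hk]
  constructor
  · contrapose!
    intro hlt
    calc _ ≤ (Finset.Ico 1 j).card := Finset.card_le_card fun b hb => by
            simp only [Finset.mem_filter, Finset.mem_Icc] at hb
            refine Finset.mem_Ico.2 ⟨hb.1.1, ?_⟩
            by_contra! hjb
            exact absurd (height_anti l hjb) (by omega)
      _ < j := by rw [Nat.card_Ico]; omega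
  · intro hle
    have hjs : j ≤ l.sum := by
      by_contra! hlt
      exact absurd (height_eq_zero_of_sum_lt l hlt) (by omega)
    calc j = (Finset.Icc 1 j).card := by simp
      _ ≤ _ := Finset.card_le_card fun b hb => by
        simp only [Finset.mem_filter, Finset.mem_Icc] at hb ⊢
        exact ⟨⟨hb.1, hb.2.trans hjs⟩, hle.trans (height_anti l hb.2)⟩

theorem height_transpose_transpose (hj : 0 < j) :
    height (transpose (transpose l)) j = height l j := by
  refine eq_of_forall_le_iff fun k => ?_
  rcases Nat.eq_zero_or_pos k with rfl | hk
  · simp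
  · rw [le_height_transpose_iff _ hk hj, le_height_transpose_iff _ hj hk]

theorem transpose_transpose (hl : IsPartition l) : transpose (transpose l) = l :=
  eq_of_height_eq (isPartition_transpose _) hl fun a =>
    height_transpose_transpose l (Nat.succ_pos a)

theorem head_transpose (j : ℕ) : head (transpose l) j = psum l j := by
  have filter_pos : ∀ s : Multiset ℕ,
      ((s.filter (0 < ·)).map (min · j)).sum = (s.map (min · j)).sum := fun s => by
    induction s using Multiset.induction_on with
    | empty => simp
    | cons x s ih =>
      rcases Nat.eq_zero_or_pos x with rfl | hx
      · simpa using ih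
      · simpa [hx] using ih
  rw [head, transpose, filter_pos, Multiset.map_map, psum, Finset.sum]
  simp only [Function.comp_def, min_comm]

theorem psum_transpose (j : ℕ) : psum (transpose l) j = head l j := by
  rw [← head_transpose, head_eq_sum_height, head_eq_sum_height]
  exact Finset.sum_congr rfl fun b hb =>
    height_transpose_transpose l (Finset.mem_Ioc.1 hb).1

-- The witness is the `(j + 1)`-st largest part of `l`, or `0` if `l` has at most `j` parts.
theorem exists_corner (j : ℕ) :
    ∃ a, (a = 0 ∨ a ∈ l ∧ j ≤ height l a) ∧ height l (a + 1) ≤ j := by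
  have hupper : height l (height (transpose l) (j + 1) + 1) ≤ j := by
    by_contra! hlt
    have := (le_height_transpose_iff l (k := j + 1) (Nat.succ_pos _) (by omega)).2 hlt
    omega
  refine ⟨height (transpose l) (j + 1), ?_, hupper⟩
  rcases Nat.eq_zero_or_pos (height (transpose l) (j + 1)) with h0 | hpos
  · exact Or.inl h0
  · have hlower := (le_height_transpose_iff l (k := j + 1) hpos (by omega)).1 le_rfl
    exact Or.inr ⟨mem_of_height_succ_lt (by omega), by omega⟩

end Transpose

/-! ### Legendre duality between partial sums and tails -/

section Legendre

variable (l : Ptn) {m : Ptn} {a j k : ℕ}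

theorem psum_eq_sum_add_sum (j a : ℕ) :
    psum l j = ∑ b ∈ Finset.Ioc 0 a, min j (height l b) +
      ∑ b ∈ Finset.Ioc a (a + l.sum), min j (height l b) := by
  rw [Finset.sum_Ioc_consecutive _ (Nat.zero_le a) (Nat.le_add_right a l.sum), psum]
  refine Finset.sum_subset (fun b hb => ?_) fun b hb hb' => ?_
  · simp only [Finset.mem_Icc, Finset.mem_Ioc] at hb ⊢
    omega
  · simp only [Finset.mem_Icc, Finset.mem_Ioc] at hb hb'
    rw [height_eq_zero_of_sum_lt l (by omega), Nat.min_zero]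

theorem psum_le_mul_add_tail (j a : ℕ) : psum l j ≤ j * a + tail l a := by
  rw [psum_eq_sum_add_sum l j a, tail_eq_sum_height]
  refine Nat.add_le_add ?_ (Finset.sum_le_sum fun _ _ => min_le_right _ _)
  calc ∑ b ∈ Finset.Ioc 0 a, min j (height l b) ≤ ∑ _b ∈ Finset.Ioc 0 a, j :=
        Finset.sum_le_sum fun _ _ => min_le_left _ _
    _ = j * a := by simp [mul_comm]

variable {l}

theorem psum_eq_mul_add_tail (hlow : a = 0 ∨ j ≤ height l a) (hup : height l (a + 1) ≤ j) :
    psum l j = j * a + tail l a := by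
  rw [psum_eq_sum_add_sum l j a, tail_eq_sum_height]
  congr 1
  · calc ∑ b ∈ Finset.Ioc 0 a, min j (height l b) = ∑ _b ∈ Finset.Ioc 0 a, j :=
          Finset.sum_congr rfl fun b hb => min_eq_left <| by
            have hb := Finset.mem_Ioc.1 hb
            exact (hlow.resolve_left (by omega)).trans (height_anti l hb.2)
      _ = j * a := by simp [mul_comm]
  · exact Finset.sum_congr rfl fun b hb =>
      min_eq_right ((height_anti l (Finset.mem_Ioc.1 hb).1).trans hup)

theorem psum_eq_sum (h : height l 1 ≤ j) : psum l j = l.sum := by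
  rw [psum_eq_mul_add_tail (Or.inl rfl) h, tail_zero, mul_zero, zero_add]

theorem psum_le_psum_add {c : ℕ} (h : ∀ a, tail l a ≤ tail m a + c) (j : ℕ) :
    psum l j ≤ psum m j + c := by
  obtain ⟨a, hlow, hup⟩ := exists_corner m j
  calc psum l j ≤ j * a + tail l a := psum_le_mul_add_tail l j a
    _ ≤ j * a + tail m a + c := by have := h a; omega
    _ = psum m j + c := by rw [psum_eq_mul_add_tail (hlow.imp_right And.right) hup]

theorem dom_iff_tail_le : Dom l m ↔ ∀ a, tail l a ≤ tail m a := by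
  refine ⟨fun h a => ?_, fun h j => psum_le_psum_add (c := 0) h j⟩
  have hl := psum_eq_mul_add_tail (Or.inr (height_anti l (Nat.le_add_right a 1))) le_rfl
  have := psum_le_mul_add_tail m (height l (a + 1)) a
  have := h (height l (a + 1))
  omega

theorem dom_antisymm (hl : IsPartition l) (hm : IsPartition m) (h : Dom l m) (h' : Dom m l) :
    l = m :=
  eq_of_tail_eq hl hm fun a => (dom_iff_tail_le.1 h a).antisymm (dom_iff_tail_le.1 h' a)

variable (l) in
theorem sum_transpose : (transpose l).sum = l.sum := by
  have := head_add_tail (transpose l) ((transpose l).sum + height l 1)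
  rw [tail_eq_zero_of_sum_le _ (by omega), head_transpose, psum_eq_sum (by omega)] at this
  omega

theorem tail_transpose_add_mul (hlow : a = 0 ∨ k ≤ height l a) (hup : height l (a + 1) ≤ k) :
    tail (transpose l) k + k * a = head l a := by
  have := psum_eq_mul_add_tail hlow hup
  have := head_add_tail l a
  have := head_add_tail (transpose l) k
  rw [head_transpose, sum_transpose] at this
  omega

-- `head l` is piecewise linear with breaks at the parts of `l`, and `head m` is concave.
theorem dom_transpose_of_forall_mem (h : ∀ a ∈ l, head l a ≤ head m a) :
    Dom (transpose l) (transpose m) := by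
  refine dom_iff_tail_le.2 fun k => ?_
  obtain ⟨a, hlow, hup⟩ := exists_corner l k
  have hl := tail_transpose_add_mul (hlow.imp_right And.right) hup
  have hm := psum_le_mul_add_tail (transpose m) a k
  have hle : head l a ≤ head m a := by
    rcases hlow with rfl | ⟨ha, -⟩
    · rw [head_zero, head_zero]
    · exact h a ha
  rw [psum_transpose] at hm
  linarith

end Legendre

/-! ### Collapses -/

/-- The residue modulo `2` of the parts whose multiplicity is unrestricted in type `X`. -/
def residue : PType → ℕ
  | PType.B => 1
  | PType.C => 0
  | PType.D => 1

theorem residue_lt_two (X : PType) : residue X < 2 := by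
  cases X <;> decide

theorem badPart_iff (X : PType) (a : ℕ) : badPart X a ↔ a % 2 ≠ residue X := by
  cases X <;> simp [badPart, residue, Nat.even_iff, Nat.odd_iff]

theorem inP_iff_tail {X : PType} {l : Ptn} :
    InP X l ↔ IsPartition l ∧ ∀ a, a % 2 = residue X → 2 ∣ tail l a := by
  refine and_congr_right fun hl => ?_
  simp only [badPart_iff, even_iff_two_dvd]
  have hX := residue_lt_two X
  constructor
  · intro h a ha
    have tail_add_two_mul : ∀ k, tail l (a + 2 * k) % 2 = tail l a % 2 := fun k => by
      induction k with
      | zero => rfl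
      | succ k ih =>
        have := tail_convex l (a + 2 * k)
        have := h (a + 2 * k + 1) (by omega)
        rw [show a + 2 * (k + 1) = a + 2 * k + 2 by ring]
        omega
    rw [Nat.dvd_iff_mod_eq_zero, ← tail_add_two_mul l.sum, tail_eq_zero_of_sum_le l (by omega)]
  · intro h a ha
    rcases a with _ | a
    · rw [count_zero_eq_zero hl]
      exact dvd_zero 2
    · have := tail_convex l a
      have := h a (by omega)
      have := h (a + 2) (by omega)
      omega

theorem inP_transpose_iff {X : PType} {l : Ptn} :
    InP X (transpose l) ↔ ∀ a ∈ l, 2 ∣ head l a + residue X * a := by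
  have hX := residue_lt_two X
  have mul_mod : ∀ {k a : ℕ}, k % 2 = residue X → k * a % 2 = residue X * a % 2 := by
    rintro k a hk
    rw [← hk, Nat.mod_mul_mod]
  rw [inP_iff_tail]
  constructor
  · rintro ⟨-, h⟩ a ha
    have hcorner : height l (a + 1) < height l a := by
      have := height_eq_height_add_count l a
      have := Multiset.count_pos.2 ha
      omega
    obtain ⟨k, hlow, hup, hk⟩ :
        ∃ k ≤ height l a, height l (a + 1) ≤ k ∧ k % 2 = residue X := by
      by_cases hpar : height l a % 2 = residue X
      · exact ⟨_, le_rfl, hcorner.le, hpar⟩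
      · exact ⟨height l a - 1, by omega, by omega, by omega⟩
    have := tail_transpose_add_mul (Or.inr hlow) hup
    have := h k hk
    have := mul_mod (a := a) hk
    omega
  · refine fun h => ⟨isPartition_transpose l, fun k hk => ?_⟩
    obtain ⟨a, hlow, hup⟩ := exists_corner l k
    have htail := tail_transpose_add_mul (hlow.imp_right And.right) hup
    rcases hlow with rfl | ⟨ha, -⟩
    · rw [head_zero] at htail
      omega
    · have := h a ha
      have := mul_mod (a := a) hk
      omega

theorem collapse_eq_of_isCollapse {X : PType} {l m : Ptn} (h : IsCollapse X l m) :
    collapse X l = m := by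
  have hd : CollapseDefined X l := ⟨m, h⟩
  obtain ⟨hP, hsum, hdom, hmax⟩ := hd.choose_spec
  rw [collapse, dif_pos hd]
  exact dom_antisymm hP.1 h.1.1 (h.2.2.2 _ hP hsum hdom) (hmax _ h.1 h.2.1 h.2.2.1)

/-- The largest minorant of the convex function `f` that could be the tail function of a partition
in type `X` with `residue X = e`: round down to even values on the residue class of `e`, and cut
`f` off at the interpolation of these values elsewhere. -/
def collapseTail (e : ℕ) (f : ℕ → ℕ) (a : ℕ) : ℕ :=
  if a % 2 = e then 2 * (f a / 2)
  else if a = 0 then f 0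
  else min (f a) (f (a - 1) / 2 + f (a + 1) / 2)

section CollapseTail

variable {e a : ℕ} {f : ℕ → ℕ}

theorem collapseTail_of_mod_eq (h : a % 2 = e) : collapseTail e f a = 2 * (f a / 2) :=
  if_pos h

theorem collapseTail_zero (h : e = 0 → 2 ∣ f 0) : collapseTail e f 0 = f 0 := by
  unfold collapseTail
  split_ifs <;> omega

theorem collapseTail_succ_of_mod_ne (h : (a + 1) % 2 ≠ e) :
    collapseTail e f (a + 1) = min (f (a + 1)) (f a / 2 + f (a + 2) / 2) := by
  rw [collapseTail, if_neg h, if_neg a.succ_ne_zero, Nat.add_sub_cancel]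

theorem collapseTail_le (e : ℕ) (f : ℕ → ℕ) (a : ℕ) : collapseTail e f a ≤ f a := by
  unfold collapseTail
  split_ifs with _ h0
  · omega
  · rw [h0]
  · exact min_le_left _ _

variable (hf : ∀ a, 2 * f (a + 1) ≤ f a + f (a + 2))
include hf

theorem le_collapseTail_add_one (e a : ℕ) : f a ≤ collapseTail e f a + 1 := by
  by_cases h : a % 2 = e
  · rw [collapseTail_of_mod_eq h]
    omega
  · rcases a with _ | a
    · rw [collapseTail_zero (by omega)]
      omega
    · have := hf a
      rw [collapseTail_succ_of_mod_ne h]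
      omega

theorem collapseTail_succ_of_dvd (h : (a + 1) % 2 ≠ e) (ha : 2 ∣ f a) :
    collapseTail e f (a + 1) = f (a + 1) := by
  have := hf a
  rw [collapseTail_succ_of_mod_ne h]
  omega

theorem collapseTail_convex (he : e < 2) (a : ℕ) :
    2 * collapseTail e f (a + 1) ≤ collapseTail e f a + collapseTail e f (a + 2) := by
  by_cases h : (a + 1) % 2 = e
  · have hf₀ := hf a
    have hf₁ : 2 * f (a + 2) ≤ f (a + 1) + f (a + 3) := hf (a + 1)
    rw [collapseTail_of_mod_eq h, collapseTail_succ_of_mod_ne (a := a + 1) (by omega)]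
    rcases a with _ | a
    · simp only [Nat.zero_add, Nat.reduceAdd] at *
      rw [collapseTail_zero (by omega)]
      omega
    · have := hf a
      simp only [Nat.add_assoc, Nat.reduceAdd] at *
      rw [collapseTail_succ_of_mod_ne (a := a) (by omega)]
      omega
  · rw [collapseTail_succ_of_mod_ne h, collapseTail_of_mod_eq (a := a) (by omega),
      collapseTail_of_mod_eq (a := a + 2) (by omega)]
    omega

end CollapseTail

theorem exists_tail_eq_of_convex (N : ℕ) {f : ℕ → ℕ} (hN : ∀ a, N ≤ a → f a = 0)
    (hf : ∀ a, 2 * f (a + 1) ≤ f a + f (a + 2)) :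
    ∃ l : Ptn, IsPartition l ∧ ∀ a, tail l a = f a := by
  induction N generalizing f with
  | zero => exact ⟨0, by simp [IsPartition], fun a => by simp [tail, hN a]⟩
  | succ N ih =>
    obtain ⟨l, hl, htail⟩ :=
      ih (f := fun a => f (a + 1)) (fun a ha => hN _ (by omega)) fun a => hf (a + 1)
    refine ⟨l.map (· + 1) + Multiset.replicate (f 0 + f 2 - 2 * f 1) 1, fun p hp => ?_,
      fun a => ?_⟩
    · rcases Multiset.mem_add.1 hp with hp | hp
      · obtain ⟨q, -, rfl⟩ := Multiset.mem_map.1 hp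
        exact q.succ_pos
      · rw [Multiset.eq_of_mem_replicate hp]
        exact Nat.one_pos
    · rcases a with _ | a
      · have hzero : tail (l.map (· + 1)) 0 = tail l 0 + Multiset.card l := by simp [tail]
        have := height_one hl
        have := tail_eq_height_add_tail l 0
        have := htail 0
        have := htail 1
        have := hf 0
        rw [tail_add, hzero, tail_zero (Multiset.replicate _ 1), Multiset.sum_replicate]
        simp only [zero_add, Nat.reduceAdd, smul_eq_mul, mul_one] at *
        omega
      · rw [tail_add, ← htail a]
        simp [tail]

theorem isCollapse_of_tail_eq {X : PType} {l m : Ptn} (hs : X = PType.C → 2 ∣ l.sum)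
    (hm : IsPartition m) (htail : ∀ a, tail m a = collapseTail (residue X) (tail l) a) :
    IsCollapse X l m := by
  have hX := residue_lt_two X
  refine ⟨inP_iff_tail.2 ⟨hm, fun a ha => ?_⟩, ?_, dom_iff_tail_le.2 fun a => ?_,
    fun v hv _ hdom => dom_iff_tail_le.2 fun a => ?_⟩
  · rw [htail, collapseTail_of_mod_eq ha]
    exact dvd_mul_right 2 _
  · rw [← tail_zero m, htail, collapseTail_zero, tail_zero]
    rw [tail_zero]
    cases X <;> simp_all [residue]
  · rw [htail]
    exact collapseTail_le _ _ _
  · have hle := dom_iff_tail_le.1 hdom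
    have heven := (inP_iff_tail.1 hv).2
    rw [htail]
    by_cases ha : a % 2 = residue X
    · have := heven a ha
      have := hle a
      rw [collapseTail_of_mod_eq ha]
      omega
    · rcases a with _ | a
      · rw [collapseTail_zero (by omega)]
        exact hle 0
      · have := heven a (by omega)
        have := heven (a + 2) (by omega)
        have := tail_convex v a
        have := hle a
        have := hle (a + 2)
        rw [collapseTail_succ_of_mod_ne ha]
        exact le_min (hle _) (by omega)

theorem two_mul_tail_le (l : Ptn) (a : ℕ) : 2 * tail l (a + 1) ≤ tail l a + tail l (a + 2) := by
  rw [tail_convex]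
  exact Nat.le_add_right _ _

section Collapse

variable {X : PType} {l : Ptn} {a : ℕ} (hs : X = PType.C → 2 ∣ l.sum)
include hs

theorem isCollapse_collapse_and_tail_collapse :
    IsCollapse X l (collapse X l) ∧
      ∀ a, tail (collapse X l) a = collapseTail (residue X) (tail l) a := by
  obtain ⟨m, hm, htail⟩ := exists_tail_eq_of_convex (f := collapseTail (residue X) (tail l)) l.sum
    (fun a ha => Nat.eq_zero_of_le_zero <|
      (collapseTail_le _ _ a).trans (tail_eq_zero_of_sum_le l ha).le)
    (collapseTail_convex (two_mul_tail_le l) (residue_lt_two X))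
  have hcol := isCollapse_of_tail_eq hs hm htail
  rw [collapse_eq_of_isCollapse hcol]
  exact ⟨hcol, htail⟩

theorem isCollapse_collapse : IsCollapse X l (collapse X l) :=
  (isCollapse_collapse_and_tail_collapse hs).1

theorem tail_collapse (a : ℕ) :
    tail (collapse X l) a = collapseTail (residue X) (tail l) a :=
  (isCollapse_collapse_and_tail_collapse hs).2 a

theorem sum_collapse : (collapse X l).sum = l.sum :=
  (isCollapse_collapse hs).2.1

theorem tail_collapse_le (a : ℕ) : tail (collapse X l) a ≤ tail l a :=
  (tail_collapse hs a).trans_le (collapseTail_le _ _ a)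

theorem tail_le_tail_collapse_add_one (a : ℕ) : tail l a ≤ tail (collapse X l) a + 1 := by
  rw [tail_collapse hs]
  exact le_collapseTail_add_one (two_mul_tail_le l) _ a

theorem tail_collapse_of_dvd (ha : a % 2 = residue X) (heven : 2 ∣ tail l a) :
    tail (collapse X l) a = tail l a := by
  rw [tail_collapse hs, collapseTail_of_mod_eq ha]
  omega

theorem tail_collapse_succ_of_dvd (ha : (a + 1) % 2 ≠ residue X) (heven : 2 ∣ tail l a) :
    tail (collapse X l) (a + 1) = tail l (a + 1) := by
  rw [tail_collapse hs, collapseTail_succ_of_dvd (two_mul_tail_le l) ha heven]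

end Collapse

-- A competitor `v*` of `m*` satisfies `2 ∣ head v a + residue X * a` at each part `a` of `v`, hence
-- cannot exploit the places where `head k` exceeds `head m`.
theorem collapse_transpose_eq {X : PType} {k m : Ptn} (hm : InP X (transpose m))
    (hsum : m.sum = k.sum) (hle : ∀ a, tail k a ≤ tail m a)
    (hge : ∀ a, tail m a ≤ tail k a ∨
      tail m a ≤ tail k a + 1 ∧ 2 ∣ head m a + residue X * a) :
    collapse X (transpose k) = transpose m := by
  have hhead : ∀ a, head m a + tail m a = head k a + tail k a := fun a => by
    rw [head_add_tail, head_add_tail, hsum]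
  refine collapse_eq_of_isCollapse ⟨hm, by rw [sum_transpose, sum_transpose, hsum], fun a => ?_,
    fun v hv _ hdom => ?_⟩
  · have := hhead a
    have := hle a
    rw [psum_transpose, psum_transpose]
    omega
  · have hvv := transpose_transpose v hv.1
    rw [← hvv] at hv hdom ⊢
    refine dom_transpose_of_forall_mem fun a ha => ?_
    have := inP_transpose_iff.1 hv a ha
    have hva := hdom a
    rw [psum_transpose, psum_transpose] at hva
    have := hhead a
    rcases hge a with h | ⟨h, h'⟩ <;> omega

section CollapseTranspose

variable {X : PType} {l : Ptn} {j : ℕ} (hs : X = PType.C → 2 ∣ l.sum)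
include hs

theorem sum_transpose_collapse : (transpose (collapse X (transpose l))).sum = l.sum := by
  rw [sum_transpose, sum_collapse (by rwa [sum_transpose]), sum_transpose]

theorem psum_collapse_transpose_add_tail (j : ℕ) :
    psum (collapse X (transpose l)) j + tail (transpose (collapse X (transpose l))) j =
      head l j + tail l j := by
  rw [← head_transpose, head_add_tail, head_add_tail, sum_transpose_collapse hs]

theorem tail_le_tail_transpose_collapse (j : ℕ) :
    tail l j ≤ tail (transpose (collapse X (transpose l))) j := by
  have hdom := (isCollapse_collapse (l := transpose l) (by rwa [sum_transpose])).2.2.1 j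
  have := psum_collapse_transpose_add_tail hs j
  rw [psum_transpose] at hdom
  omega

theorem tail_transpose_collapse_le (j : ℕ) :
    tail (transpose (collapse X (transpose l))) j ≤ tail l j + 1 := by
  have hle := psum_le_psum_add (tail_le_tail_collapse_add_one (X := X) (l := transpose l)
    (by rwa [sum_transpose])) j
  have := psum_collapse_transpose_add_tail hs j
  rw [psum_transpose] at hle
  omega

theorem tail_transpose_collapse_eq_zero (hj : 0 < j) (h : ∀ p ∈ l, p < j) :
    tail (transpose (collapse X (transpose l))) j = 0 := by
  have hs' : X = PType.C → 2 ∣ (transpose l).sum := by rwa [sum_transpose]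
  have hheight : height (transpose l) 1 < j := by
    by_contra! hle
    obtain ⟨p, hp, hjp⟩ :=
      (height_pos_iff l).1 ((le_height_transpose_iff l hj Nat.one_pos).1 hle)
    exact (h p hp).not_ge hjp
  have hheight' : height (collapse X (transpose l)) 1 ≤ j := by
    have := tail_eq_height_add_tail (transpose l) 0
    have := tail_eq_height_add_tail (collapse X (transpose l)) 0
    have := tail_collapse_le hs' 0
    have := tail_le_tail_collapse_add_one hs' 1
    simp only [Nat.zero_add] at *
    omega
  have := head_add_tail (transpose (collapse X (transpose l))) j
  rw [head_transpose, sum_transpose, psum_eq_sum hheight'] at this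
  omega

theorem tail_lt_tail_transpose_collapse (hheight : height l j % 2 = residue X)
    (hodd : ¬2 ∣ head l j + residue X * j) :
    tail l j < tail (transpose (collapse X (transpose l))) j := by
  have hs' : X = PType.C → 2 ∣ (transpose l).sum := by rwa [sum_transpose]
  have hcorner := tail_transpose_add_mul (Or.inr le_rfl) (height_anti l (Nat.le_add_right j 1))
  have heven := (inP_iff_tail.1 (isCollapse_collapse hs').1).2 _ hheight
  have hle := tail_collapse_le hs' (height l j)
  have hmul : height l j * j % 2 = residue X * j % 2 := by rw [← hheight, Nat.mod_mul_mod]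
  have hpsum := psum_le_mul_add_tail (collapse X (transpose l)) j (height l j)
  have := psum_collapse_transpose_add_tail hs j
  rw [Nat.mul_comm j] at hpsum
  omega

end CollapseTranspose

/-! ### Raising the largest and lowering the smallest part -/

section UpDown

variable {l : Ptn} {a : ℕ}

theorem le_maxPart (h : a ∈ l) : a ≤ maxPart l :=
  Multiset.le_sup h

theorem maxPart_mem (h : l ≠ 0) : maxPart l ∈ l := by
  obtain ⟨a, ha, hsup⟩ := Multiset.exists_max_image id h
  have hle : maxPart l ≤ a := Multiset.sup_le.2 hsup
  rwa [hle.antisymm (le_maxPart ha)]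

theorem minPart_le (h : a ∈ l) : minPart l ≤ a :=
  Nat.sInf_le h

theorem minPart_mem (h : l ≠ 0) : minPart l ∈ l :=
  Nat.sInf_mem (Multiset.exists_mem_of_ne_zero h)

theorem minPart_zero : minPart 0 = 0 := by
  simp [minPart]

theorem minPart_eq_one (hl : IsPartition l) (h : 1 ∈ l) : minPart l = 1 :=
  (minPart_le h).antisymm (hl _ (minPart_mem fun h0 => by simp [h0] at h))

theorem tail_up (l : Ptn) (a : ℕ) :
    tail (up l) a = tail l a + if a ≤ maxPart l then 1 else 0 := by
  rcases eq_or_ne l 0 with rfl | hl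
  · simp only [up, maxPart, tail, Multiset.sup_zero, Nat.bot_eq_zero, Multiset.erase_zero,
      Multiset.map_cons, Multiset.map_zero, Multiset.sum_cons, Multiset.sum_zero]
    split_ifs <;> omega
  · have := tail_cons (l.erase (maxPart l)) (maxPart l) a
    rw [Multiset.cons_erase (maxPart_mem hl)] at this
    rw [up, tail_cons]
    split_ifs <;> omega

theorem tail_down (l : Ptn) (a : ℕ) :
    tail (down l) a + (if a < minPart l then 1 else 0) = tail l a := by
  rcases eq_or_ne l 0 with rfl | hl
  · simp [down, minPart_zero]
  · have := tail_cons (l.erase (minPart l)) (minPart l) a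
    rw [Multiset.cons_erase (minPart_mem hl)] at this
    rw [down]
    split_ifs <;> first | rw [tail_cons]; omega | omega

theorem sum_up (l : Ptn) : (up l).sum = l.sum + 1 := by
  simpa [tail_zero] using tail_up l 0

theorem isPartition_up (hl : IsPartition l) : IsPartition (up l) := by
  intro a ha
  rcases Multiset.mem_cons.1 ha with rfl | ha
  · exact Nat.succ_pos _
  · exact hl a (Multiset.mem_of_mem_erase ha)

end UpDown

/-! ### The simplified dual -/

/-- The type of the dual group, in which `dS X` takes its values. -/
def PType.dual : PType → PType
  | PType.B => PType.C
  | PType.C => PType.B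
  | PType.D => PType.D

/-- The partition whose transpose is the simplified dual of `l` in type `X`. Its smallest part is
lowered iff `residue X = 1`, and its largest part is raised iff `residue X.dual = 1`. -/
noncomputable def shift : PType → Ptn → Ptn
  | PType.B, l => down l
  | PType.C, l => up l
  | PType.D, l => down (up l)

/-- The unmarked part of the partition whose transpose is collapsed in the definition of `dS X`. -/
noncomputable def innerCollapse : PType → Ptn → Ptn
  | PType.B, l => collapse PType.C (down l)
  | PType.C, l => collapse PType.B (up l)
  | PType.D, l => transpose (collapse PType.D (transpose l))

theorem dS_eq (X : PType) (nu eta : Ptn) :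
    dS X nu eta = collapse X.dual (transpose (nu + innerCollapse X eta)) := by
  cases X <;> rfl

/-- The marked parts of an ultrabasic block of type `X` whose largest marked part is `n`. -/
def marks : PType → ℕ → Ptn
  | PType.C, n => {n}
  | _, n => {n, 1}

section Marks

variable {X : PType} {j n : ℕ}

theorem height_marks (hj : X ≠ PType.C → 1 < j) (hjn : j ≤ n) :
    height (marks X n) j = 1 := by
  have height_singleton : ∀ a, height {a} j = if j ≤ a then 1 else 0 := fun a => by
    rw [← Multiset.cons_zero, height_cons]
    simp [height]
  cases X <;>
    simp only [marks, Multiset.insert_eq_cons, height_cons, height_singleton] <;>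
    grind

theorem tail_marks (hj : 0 < j) : tail (marks X n) j = n - j := by
  cases X <;>
    simp only [marks, tail, Multiset.insert_eq_cons, Multiset.map_cons, Multiset.map_singleton,
      Multiset.sum_cons, Multiset.sum_singleton] <;>
    omega

theorem sum_marks (X : PType) (n : ℕ) : (marks X n).sum = n + residue X := by
  cases X <;> simp [marks, residue]

end Marks

/-- `l` is the underlying partition of a special ultrabasic block of type `X` whose marked parts
are `marks X n`. Being special is encoded by `height_mod_two`: among the parts `a` of `l` with
`a % 2 ≠ residue X`, those with an odd number of marks `≥ a` are the ones with `a ≤ n`. -/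
structure IsSpecialUltrabasic (X : PType) (l : Ptn) (n : ℕ) : Prop where
  inP : InP X l
  sumParity_sum : sumParity X l.sum
  one_mem : X ≠ PType.C → 1 ∈ l
  one_lt : X ≠ PType.C → 1 < n
  mod_two : n % 2 = residue X
  largestWith : LargestWith l (heightParity X) n
  height_mod_two : ∀ a ∈ l, a ≤ n → a % 2 ≠ residue X → height l a % 2 = residue X.dual

theorem heightParity_iff (X : PType) (a : ℕ) : heightParity X a ↔ a % 2 ≠ residue X.dual := by
  cases X <;> simp [heightParity, PType.dual, residue, Nat.even_iff, Nat.odd_iff]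

theorem exists_mem_height_eq {l : Ptn} {a : ℕ} (ha : 0 < a) (h : 0 < height l a) :
    ∃ b ∈ l, a ≤ b ∧ height l b = height l a := by
  set b := height (transpose l) (height l a)
  have hab : a ≤ b := (le_height_transpose_iff l ha h).2 le_rfl
  have hle : height l a ≤ height l b := (le_height_transpose_iff l (by omega) h).1 le_rfl
  have hlt : height l (b + 1) < height l a := by
    by_contra! hge
    have := (le_height_transpose_iff l b.succ_pos h).2 hge
    omega
  exact ⟨b, mem_of_height_succ_lt (by omega), hab, (height_anti l hab).antisymm hle⟩

theorem tail_shift_eq_zero (X : PType) {l : Ptn} {j : ℕ} (hj : maxPart l < j) :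
    tail (shift X l) j = 0 := by
  have hl : tail l j = 0 := tail_eq_zero l fun _ hp => (le_maxPart hp).trans hj.le
  have hup := tail_up l j
  rw [hl, if_neg (by omega)] at hup
  cases X with
  | B => exact Nat.eq_zero_of_add_eq_zero_right ((tail_down l j).trans hl)
  | C => exact hup
  | D => exact Nat.eq_zero_of_add_eq_zero_right ((tail_down (up l) j).trans hup)

namespace IsSpecialUltrabasic

variable {X : PType} {l η : Ptn} {n j : ℕ}

section Shift

variable (h : IsSpecialUltrabasic X l n)
include h

theorem top_le_maxPart : n ≤ maxPart l :=
  le_maxPart h.largestWith.1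

theorem ne_zero : l ≠ 0 := fun h0 => by
  simpa [h0] using h.largestWith.1

theorem height_mod_two_of_lt (hnj : n < j) (hj : j ≤ maxPart l) :
    height l j % 2 = residue X.dual := by
  obtain ⟨b, hb, hjb, hheight⟩ := exists_mem_height_eq (l := l) (by omega)
    ((height_pos_iff l).2 ⟨_, maxPart_mem h.ne_zero, hj⟩)
  by_contra hne
  have := h.largestWith.2.2 b hb ((heightParity_iff X _).2 (by rwa [hheight]))
  omega

theorem maxPart_mod_two (hX : X ≠ PType.B) : maxPart l % 2 = residue X := by
  by_contra hne
  have hlt : n < maxPart l := h.top_le_maxPart.lt_of_ne fun heq => hne (heq ▸ h.mod_two)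
  obtain ⟨m, hm⟩ : ∃ m, maxPart l = m + 1 := ⟨maxPart l - 1, by omega⟩
  have hheight := h.height_mod_two_of_lt hlt le_rfl
  have heven := (inP_iff_tail.1 h.inP).2 m (by have := residue_lt_two X; omega)
  rw [tail_eq_height_add_tail, ← hm, tail_eq_zero l fun _ => le_maxPart] at heven
  have hdual : residue X.dual = 1 := by cases X <;> first | rfl | exact absurd rfl hX
  omega

theorem mod_two_or_height_mod_two (hj : j ∈ l) :
    j % 2 = residue X ∨ height l j % 2 = residue X.dual := by
  by_cases hmod : j % 2 = residue X
  · exact Or.inl hmod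
  · rcases le_or_gt j n with hle | hlt
    · exact Or.inr (h.height_mod_two j hj hle hmod)
    · exact Or.inr (h.height_mod_two_of_lt hlt (le_maxPart hj))

theorem minPart_up_eq_one (hX : X ≠ PType.C) : minPart (up l) = 1 := by
  have hmax := (h.one_lt hX).trans_le h.top_le_maxPart
  refine minPart_eq_one (isPartition_up h.inP.1) (Multiset.mem_cons_of_mem ?_)
  exact (Multiset.mem_erase_of_ne hmax.ne).2 (h.one_mem hX)

theorem tail_shift (hj : 0 < j) (hjm : j ≤ maxPart l) :
    tail (shift X l) j = tail l j + residue X.dual := by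
  cases X with
  | B =>
    have := tail_down l j
    rw [minPart_eq_one h.inP.1 (h.one_mem (by decide)), if_neg (by omega)] at this
    exact this
  | C => rw [shift, tail_up, if_pos hjm]; rfl
  | D =>
    have := tail_down (up l) j
    rw [h.minPart_up_eq_one (by decide), if_neg (by omega), tail_up, if_pos hjm] at this
    exact this

theorem sum_shift : (shift X l).sum + residue X = l.sum + residue X.dual := by
  cases X with
  | B =>
    have := tail_down l 0
    rw [minPart_eq_one h.inP.1 (h.one_mem (by decide))] at this
    simpa [tail_zero, shift, residue, PType.dual] using this
  | C => exact sum_up l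
  | D =>
    have := tail_down (up l) 0
    rw [h.minPart_up_eq_one (by decide)] at this
    simpa [tail_zero, sum_up, shift, residue, PType.dual] using this

theorem mem_or_of_mem_shift (hj : j ∈ shift X l) :
    j ∈ l ∨ X ≠ PType.B ∧ j = maxPart l + 1 := by
  have mem_up : j ∈ up l → j ∈ l ∨ j = maxPart l + 1 := fun hj =>
    (Multiset.mem_cons.1 hj).symm.imp_left Multiset.mem_of_mem_erase
  cases X with
  | B =>
    rw [shift, down, if_pos (minPart_eq_one h.inP.1 (h.one_mem (by decide))).le] at hj
    exact Or.inl (Multiset.mem_of_mem_erase hj)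
  | C => exact (mem_up hj).imp_right fun hj => ⟨by decide, hj⟩
  | D =>
    rw [shift, down, if_pos (h.minPart_up_eq_one (by decide)).le] at hj
    exact (mem_up (Multiset.mem_of_mem_erase hj)).imp_right fun hj => ⟨by decide, hj⟩

theorem dvd_head_shift_iff (hj : 0 < j) (hjm : j ≤ maxPart l) :
    2 ∣ head (shift X l) j + residue X.dual * j ↔
      j % 2 = residue X ∨ height l j % 2 = residue X.dual := by
  have hhead := head_add_tail (shift X l) j
  have hsum := h.sum_shift
  have hpar := h.sumParity_sum
  rw [h.tail_shift hj hjm] at hhead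
  obtain ⟨i, rfl⟩ : ∃ i, j = i + 1 := ⟨j - 1, by omega⟩
  have htail := tail_eq_height_add_tail l i
  have heven := (inP_iff_tail.1 h.inP).2 i
  have heven' := (inP_iff_tail.1 h.inP).2 (i + 1)
  cases X <;>
    simp only [sumParity, Nat.odd_iff, Nat.even_iff, residue, PType.dual] at * <;> omega

theorem inP_transpose_shift : InP X.dual (transpose (shift X l)) := by
  refine inP_transpose_iff.2 fun j hj => ?_
  rcases h.mem_or_of_mem_shift hj with hj | ⟨hX, rfl⟩
  · exact (h.dvd_head_shift_iff (h.inP.1 j hj) (le_maxPart hj)).2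
      (h.mod_two_or_height_mod_two hj)
  · have hhead := head_add_tail (shift X l) (maxPart l + 1)
    rw [tail_shift_eq_zero X (Nat.lt_succ_self _)] at hhead
    have hsum := h.sum_shift
    have hpar := h.sumParity_sum
    have hmax := h.maxPart_mod_two hX
    cases X
    · exact absurd rfl hX
    all_goals
      simp only [sumParity, Nat.even_iff, residue, PType.dual] at *
      omega

end Shift
/-! ### The inner collapse -/

theorem isPartition_unmarked (h : IsSpecialUltrabasic X (marks X n + η) n) : IsPartition η :=
  fun _ ha => h.inP.1 _ (Multiset.mem_add.2 (Or.inr ha))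

theorem sum_unmarked_mod_two (h : IsSpecialUltrabasic X (marks X n + η) n) :
    η.sum % 2 = if X = PType.B then 1 else 0 := by
  have hpar := h.sumParity_sum
  have hn := h.mod_two
  rw [Multiset.sum_add, sum_marks] at hpar
  cases X <;>
    simp only [sumParity, residue, Nat.odd_iff, Nat.even_iff, reduceCtorEq, if_true, if_false]
      at hpar hn ⊢ <;>
    omega

theorem lt_top (h : IsSpecialUltrabasic X l n) (hjm : j ≤ maxPart l)
    (hmod : j % 2 ≠ residue X) (hheight : height l j % 2 ≠ residue X.dual) : j < n := by
  by_contra! hle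
  refine hheight (h.height_mod_two_of_lt (hle.lt_of_ne ?_) hjm)
  rintro rfl
  exact hmod h.mod_two

theorem tail_unmarked_mod_two (h : IsSpecialUltrabasic X (marks X n + η) n) (hj : 0 < j)
    (hjn : j < n) (hmod : j % 2 ≠ residue X)
    (hheight : height (marks X n + η) j % 2 ≠ residue X.dual) :
    tail η j % 2 = residue X.dual := by
  have hX := residue_lt_two X
  have hX' := residue_lt_two X.dual
  have hn := h.mod_two
  have htail : tail (marks X n + η) j = n - j + tail η j := by rw [tail_add, tail_marks hj]
  obtain ⟨i, rfl⟩ : ∃ i, j = i + 1 := ⟨j - 1, by omega⟩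
  have := tail_eq_height_add_tail (marks X n + η) i
  have := (inP_iff_tail.1 h.inP).2 i (by omega)
  omega

section TypeB

variable (h : IsSpecialUltrabasic PType.B (marks PType.B n + η) n)
include h

theorem sum_down_unmarked : (down η).sum + 1 = η.sum := by
  have hodd : η.sum % 2 = 1 := h.sum_unmarked_mod_two
  have hmin : 0 < minPart η :=
    h.isPartition_unmarked _ (minPart_mem fun h0 => by simp [h0] at hodd)
  simpa only [tail_zero, if_pos hmin] using tail_down η 0

theorem two_dvd_sum_down_unmarked : 2 ∣ (down η).sum := by
  have hodd : η.sum % 2 = 1 := h.sum_unmarked_mod_two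
  have := h.sum_down_unmarked
  omega

theorem card_unmarked_mod_two : Multiset.card η % 2 = 1 := by
  have hpar := h.sumParity_sum
  have heven := (inP_iff_tail.1 h.inP).2 1 rfl
  have hsum := tail_eq_height_add_tail (marks PType.B n + η) 0
  have hcard : Multiset.card (marks PType.B n) = 2 := rfl
  rw [tail_zero, Nat.zero_add, height_one h.inP.1, Multiset.card_add, hcard] at hsum
  rw [sumParity, Nat.odd_iff] at hpar
  omega

theorem tail_mod_two_of_lt_minPart (hj : j < minPart η) : tail η j % 2 = (j + 1) % 2 := by
  have hsum := tail_add_mul_card η fun p hp => hj.le.trans (minPart_le hp)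
  have hodd : η.sum % 2 = 1 := h.sum_unmarked_mod_two
  have hmul : j * Multiset.card η % 2 = j % 2 := by
    rw [Nat.mul_mod, h.card_unmarked_mod_two, mul_one, Nat.mod_mod]
  omega

theorem tail_collapse_down_of_lt_minPart (hj : j < minPart η) :
    tail (collapse PType.C (down η)) j = tail (down η) j := by
  have tail_down_mod_two : ∀ i < minPart η, tail (down η) i % 2 = i % 2 := fun i hi => by
    have := tail_down η i
    have := h.tail_mod_two_of_lt_minPart hi
    rw [if_pos hi] at *
    omega
  have hs : PType.C = PType.C → 2 ∣ (down η).sum := fun _ => h.two_dvd_sum_down_unmarked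
  by_cases hmod : j % 2 = 0
  · have := tail_down_mod_two j hj
    exact tail_collapse_of_dvd hs hmod (by omega)
  · obtain ⟨i, rfl⟩ : ∃ i, j = i + 1 := ⟨j - 1, by omega⟩
    have := tail_down_mod_two i (by omega)
    exact tail_collapse_succ_of_dvd hs hmod (by omega)

theorem tail_unmarked_le_tail_collapse_down_add_one (j : ℕ) :
    tail η j ≤ tail (collapse PType.C (down η)) j + 1 := by
  have hdown := tail_down η j
  have hcol := tail_le_tail_collapse_add_one (X := PType.C) (fun _ => h.two_dvd_sum_down_unmarked) j
  split_ifs at hdown with hj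
  · rw [h.tail_collapse_down_of_lt_minPart hj]
    exact hdown.ge
  · omega

theorem tail_collapse_down_of_dvd (hj : j % 2 = 0) (heven : 2 ∣ tail η j) :
    tail (collapse PType.C (down η)) j = tail η j := by
  have hdown := tail_down η j
  have hmin : ¬j < minPart η := fun hlt => by
    have := h.tail_mod_two_of_lt_minPart hlt
    omega
  rw [if_neg hmin] at hdown
  rw [tail_collapse_of_dvd (fun _ => h.two_dvd_sum_down_unmarked) hj (by omega), ← hdown]
  rfl

end TypeB

theorem maxPart_unmarked (h : IsSpecialUltrabasic PType.C (marks PType.C n + η) n) :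
    maxPart η = maxPart (marks PType.C n + η) := by
  have hheight := (heightParity_iff _ _).1 h.largestWith.2.1
  rw [height_add, height_marks (by simp) le_rfl, PType.dual, residue] at hheight
  obtain ⟨p, hp, hnp⟩ : ∃ p ∈ η, n ≤ p := (height_pos_iff η).1 (by omega)
  have hle : n ≤ η.sup := hnp.trans (le_maxPart hp)
  simpa [maxPart, marks] using hle

theorem sum_innerCollapse (h : IsSpecialUltrabasic X (marks X n + η) n) :
    (innerCollapse X η).sum + residue X = η.sum + residue X.dual := by
  cases X with
  | B =>
    rw [innerCollapse, sum_collapse fun _ => h.two_dvd_sum_down_unmarked]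
    exact h.sum_down_unmarked
  | C => rw [innerCollapse, sum_collapse (by simp), sum_up]; rfl
  | D => rw [innerCollapse, sum_transpose_collapse (by simp)]; rfl

theorem tail_innerCollapse_le (h : IsSpecialUltrabasic X (marks X n + η) n) (j : ℕ) :
    tail (innerCollapse X η) j ≤ tail η j + residue X.dual := by
  cases X with
  | B =>
    exact (tail_collapse_le (fun _ => h.two_dvd_sum_down_unmarked) j).trans
      (le_of_add_le_left (tail_down η j).le)
  | C =>
    refine (tail_collapse_le (by simp) j).trans ?_
    rw [tail_up, PType.dual, residue]
    split_ifs <;> omega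
  | D => exact tail_transpose_collapse_le (by simp) j

theorem le_tail_innerCollapse_add_one (h : IsSpecialUltrabasic X (marks X n + η) n)
    (hj : j ≤ maxPart (marks X n + η)) :
    tail η j + residue X.dual ≤ tail (innerCollapse X η) j + 1 := by
  cases X with
  | B => exact h.tail_unmarked_le_tail_collapse_down_add_one j
  | C =>
    have := tail_le_tail_collapse_add_one (X := PType.B) (l := up η) (by simp) j
    rwa [tail_up, if_pos (h.maxPart_unmarked ▸ hj)] at this
  | D => exact Nat.succ_le_succ (tail_le_tail_transpose_collapse (by simp) j)

theorem le_tail_innerCollapse (h : IsSpecialUltrabasic X (marks X n + η) n) (hj : 0 < j)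
    (hjm : j ≤ maxPart (marks X n + η)) (hmod : j % 2 ≠ residue X)
    (hheight : height (marks X n + η) j % 2 ≠ residue X.dual) :
    tail η j + residue X.dual ≤ tail (innerCollapse X η) j := by
  have hjn := h.lt_top hjm hmod hheight
  have htail := h.tail_unmarked_mod_two hj hjn hmod hheight
  have hsum := h.sum_unmarked_mod_two
  cases X with
  | B =>
    simp only [residue, PType.dual] at hmod htail
    exact (h.tail_collapse_down_of_dvd (by omega) (by omega)).ge
  | C =>
    simp only [residue, PType.dual] at hmod htail
    have hup := tail_up η j
    rw [if_pos (h.maxPart_unmarked ▸ hjm)] at hup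
    rw [innerCollapse, tail_collapse_of_dvd (by simp) (by rw [residue]; omega) (by omega)]
    exact hup.ge
  | D =>
    have hhead := head_add_tail η j
    simp only [residue, PType.dual] at hmod htail hheight
    rw [height_add, height_marks (fun _ => by omega) hjn.le] at hheight
    simp only [reduceCtorEq, if_false] at hsum
    refine tail_lt_tail_transpose_collapse (by simp) ?_ ?_ <;> rw [residue] <;> omega

theorem tail_innerCollapse_eq_zero (h : IsSpecialUltrabasic X (marks X n + η) n)
    (hj : maxPart (marks X n + η) < j) : tail (innerCollapse X η) j = 0 := by
  have hlt : ∀ p ∈ η, p < j := fun p hp =>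
    (le_maxPart (Multiset.mem_add.2 (Or.inr hp))).trans_lt hj
  have htail : tail η j = 0 := tail_eq_zero η fun p hp => (hlt p hp).le
  cases X with
  | B => exact Nat.eq_zero_of_le_zero ((h.tail_innerCollapse_le j).trans htail.le)
  | C =>
    refine Nat.eq_zero_of_le_zero ((tail_collapse_le (by simp) j).trans ?_)
    rw [tail_up, htail, if_neg (by rw [h.maxPart_unmarked]; omega)]
  | D => exact tail_transpose_collapse_eq_zero (by simp) (by omega) hlt

theorem tail_shift_eq_or (h : IsSpecialUltrabasic X (marks X n + η) n) (hj : 0 < j) :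
    tail (shift X (marks X n + η)) j = tail (marks X n + innerCollapse X η) j ∨
      tail (shift X (marks X n + η)) j = tail (marks X n + innerCollapse X η) j + 1 ∧
        2 ∣ head (shift X (marks X n + η)) j + residue X.dual * j := by
  rcases le_or_gt j (maxPart (marks X n + η)) with hjm | hjm
  · have hle := h.tail_innerCollapse_le j
    have hge := h.le_tail_innerCollapse_add_one hjm
    have hge' := h.le_tail_innerCollapse hj hjm
    rw [h.dvd_head_shift_iff hj hjm, h.tail_shift hj hjm, tail_add, tail_add]
    by_cases hgood : j % 2 = residue X ∨ height (marks X n + η) j % 2 = residue X.dual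
    · omega
    · have := hge' (not_or.1 hgood).1 (not_or.1 hgood).2
      omega
  · have hmarks : tail (marks X n) j = 0 := tail_eq_zero _ fun p hp =>
      (le_maxPart (Multiset.mem_add.2 (Or.inl hp))).trans hjm.le
    rw [tail_add, hmarks, h.tail_innerCollapse_eq_zero hjm, tail_shift_eq_zero X hjm]
    exact Or.inl rfl

theorem dS_eq_transpose_shift (h : IsSpecialUltrabasic X (marks X n + η) n) :
    dS X (marks X n) η = transpose (shift X (marks X n + η)) := by
  have hsum : (shift X (marks X n + η)).sum = (marks X n + innerCollapse X η).sum := by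
    have := h.sum_shift
    have := h.sum_innerCollapse
    rw [Multiset.sum_add] at *
    omega
  have hzero : tail (shift X (marks X n + η)) 0 = tail (marks X n + innerCollapse X η) 0 := by
    rw [tail_zero, tail_zero, hsum]
  rw [dS_eq]
  refine collapse_transpose_eq h.inP_transpose_shift hsum (fun j => ?_) fun j => ?_ <;>
  rcases Nat.eq_zero_or_pos j with rfl | hj
  · exact hzero.ge
  · have := h.tail_shift_eq_or hj
    omega
  · exact Or.inl hzero.le
  · exact (h.tail_shift_eq_or hj).imp Eq.le fun hodd => ⟨hodd.1.le, hodd.2⟩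

end IsSpecialUltrabasic

/-! ### The parameters of a special ultrabasic block -/

section Extraction

variable {X : PType} {nu eta : Ptn}

theorem markParity_iff (X : PType) (a : ℕ) : markParity X a ↔ a % 2 = residue X := by
  cases X <;> simp [markParity, residue, Nat.even_iff, Nat.odd_iff]

theorem antiPart_iff (X : PType) (l : Ptn) (a : ℕ) :
    AntiPart X l a ↔ a % 2 ≠ residue X ∧ height l a % 2 ≠ residue X.dual := by
  cases X <;> simp [AntiPart, PType.dual, residue, Nat.even_iff, Nat.odd_iff]

theorem exists_eq_marks (h : Ultrabasic X nu eta) :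
    ∃ n, nu = marks X n ∧ (X ≠ PType.C → 1 < n) ∧
      LargestWith (nu + eta) (heightParity X) n := by
  obtain ⟨⟨⟨hP, -, hnu, -⟩, ⟨n₁, n₂, hlt, rfl, -, htop⟩ | ⟨rfl, n₂, rfl, htop⟩⟩, hmin⟩ := h
  · have hmem : n₁ ∈ ({n₂, n₁} : Ptn) := by simp
    have hpos : 0 < n₁ := hP.1 n₁ (Multiset.mem_add.2 (Or.inl hmem))
    obtain rfl : n₁ = 1 := by
      have hle := hmin (Multiset.card_pair _ _)
      rcases Multiset.mem_cons.1 (minPart_mem (Multiset.cons_ne_zero (a := n₂) (m := {n₁})))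
        with heq | heq
      · rw [Multiset.insert_eq_cons, heq] at hle
        omega
      · rw [Multiset.insert_eq_cons, Multiset.mem_singleton.1 heq] at hle
        omega
    have hodd := (markParity_iff X 1).1 (hnu 1 hmem).2
    refine ⟨n₂, ?_, fun _ => hlt, htop⟩
    cases X <;> first | rfl | exact absurd hodd (by decide)
  · exact ⟨n₂, rfl, fun hX => absurd rfl hX, htop⟩

theorem exists_isSpecialUltrabasic (h : Ultrabasic X nu eta) (hsp : SpecialMP X (nu + eta) nu) :
    ∃ n, nu = marks X n ∧ IsSpecialUltrabasic X (marks X n + eta) n := by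
  obtain ⟨n, rfl, hn, htop⟩ := exists_eq_marks h
  obtain ⟨hP, hsum, hnu, -⟩ := h.1.1
  have hone : X ≠ PType.C → 1 ∈ marks X n := by
    cases X <;> simp [marks]
  have hmem : n ∈ marks X n := by cases X <;> simp [marks]
  refine ⟨n, rfl, hP, hsum, fun hX => Multiset.mem_add.2 (Or.inl (hone hX)), hn,
    (markParity_iff X n).1 (hnu n hmem).2, htop, fun a ha han hmod => ?_⟩
  by_contra hheight
  have heven := hsp a ha ((antiPart_iff X _ a).2 ⟨hmod, hheight⟩)
  have hpos := hP.1 a ha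
  have hlt : X ≠ PType.C → 1 < a := fun hX => by
    cases X <;> first | exact absurd rfl hX | rw [residue] at hmod; omega
  rw [height_marks hlt han] at heven
  exact absurd heven (by decide)

end Extraction

/-- From the proof of Lemma 5.6 of the paper: for a special ultrabasic block the collapse
in the simplified formula for `d_S` on basic blocks is unnecessary. -/
theorem dS_special_ultrabasic (X : PType) (nu eta : Ptn)
    (h : Ultrabasic X nu eta)
    (hr : Reduced X (nu + eta) nu)
    (hsp : SpecialMP X (nu + eta) nu) :
    (X = PType.B →
      InP PType.C (transpose (down (nu + eta))) ∧
      (transpose (down (nu + eta))).sum = (nu + eta).sum - 1 ∧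
      dS X nu eta = transpose (down (nu + eta))) ∧
    (X = PType.C →
      InP PType.B (transpose (up (nu + eta))) ∧
      (transpose (up (nu + eta))).sum = (nu + eta).sum + 1 ∧
      dS X nu eta = transpose (up (nu + eta))) ∧
    (X = PType.D →
      InP PType.D (transpose (down (up (nu + eta)))) ∧
      (transpose (down (up (nu + eta)))).sum = (nu + eta).sum ∧
      dS X nu eta = transpose (down (up (nu + eta)))) := by
  obtain ⟨n, rfl, hblock⟩ := exists_isSpecialUltrabasic h hsp
  have hsum := hblock.sum_shift
  rw [← sum_transpose (shift _ _)] at hsum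
  refine ⟨?_, ?_, ?_⟩ <;> rintro rfl
  · exact ⟨hblock.inP_transpose_shift, Nat.eq_sub_of_add_eq hsum, hblock.dS_eq_transpose_shift⟩
  · exact ⟨hblock.inP_transpose_shift, hsum, hblock.dS_eq_transpose_shift⟩
  · exact ⟨hblock.inP_transpose_shift, Nat.add_right_cancel hsum, hblock.dS_eq_transpose_shift⟩

end NilDual
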